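/- arXiv:2402.03554 — 2 statements merged into one kernel-verified Lean document; each statement's English description precedes it below -/
import Mathlib

section
/- H(X|Z) = Σ_{y : p_Y(y)>0} p_Y(y)·H(A_y|C_y), where H(X|Z) is the conditional Shannon entropy computed from the (𝒳,𝒵)-marginal of p, and H(A_y|C_y) is the conditional Shannon entropy of the first coordinate given the third coordinate under the distribution do(p|c_y). -/
open Finset

/-- Shannon entropy of a distribution on a finite type (natural-log base). -/
noncomputable def ent {α : Type*} [Fintype α] (p : α → ℝ) : ℝ :=
  ∑ a, Real.negMulLog (p a)

/-- Mutual information between the two coordinates of a joint distribution. -/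
noncomputable def mutInfo {α β : Type*} [Fintype α] [Fintype β] (q : α × β → ℝ) : ℝ :=
  ent (fun a => ∑ b, q (a, b)) + ent (fun b => ∑ a, q (a, b)) - ent q

/-- Conditional entropy of the first coordinate given the second: H(A|B) = H(A,B) - H(B). -/
noncomputable def condEntFst {α β : Type*} [Fintype α] [Fintype β] (q : α × β → ℝ) : ℝ :=
  ent q - ent (fun b => ∑ a, q (a, b))

/-- Conditional entropy of the second coordinate given the first: H(B|A) = H(A,B) - H(A). -/
noncomputable def condEntSnd {α β : Type*} [Fintype α] [Fintype β] (q : α × β → ℝ) : ℝ :=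
  ent q - ent (fun a => ∑ b, q (a, b))

section PID

variable {X Y Z : Type*} [Fintype X] [Fintype Y] [Fintype Z]

/-- 𝒳-marginal of a joint distribution on 𝒳×𝒴×𝒵. -/
noncomputable def pX (p : X × Y × Z → ℝ) (x : X) : ℝ := ∑ y, ∑ z, p (x, y, z)

/-- 𝒴-marginal. -/
noncomputable def pY (p : X × Y × Z → ℝ) (y : Y) : ℝ := ∑ x, ∑ z, p (x, y, z)

/-- 𝒵-marginal. -/
noncomputable def pZ (p : X × Y × Z → ℝ) (z : Z) : ℝ := ∑ x, ∑ y, p (x, y, z)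

/-- The do-operation: q(x,y,z) = p(x,y,z)·c(z)/p_Z(z) if p_Z(z) > 0, else 0. -/
noncomputable def doOp (p : X × Y × Z → ℝ) (c : Z → ℝ) : X × Y × Z → ℝ :=
  fun t => if 0 < pZ p t.2.2 then p t * c t.2.2 / pZ p t.2.2 else 0

/-- (𝒳,𝒵)-marginal. -/
noncomputable def margXZ (p : X × Y × Z → ℝ) : X × Z → ℝ := fun t => ∑ y, p (t.1, y, t.2)

/-- (𝒴,𝒵)-marginal. -/
noncomputable def margYZ (p : X × Y × Z → ℝ) : Y × Z → ℝ := fun t => ∑ x, p (x, t.1, t.2)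

/-- (𝒳,𝒴)-marginal. -/
noncomputable def margXY (p : X × Y × Z → ℝ) : X × Y → ℝ := fun t => ∑ z, p (t.1, t.2, z)

/-- c_y(z) = Pr(Z = z | Y = y). -/
noncomputable def cy (p : X × Y × Z → ℝ) (y : Y) : Z → ℝ :=
  fun z => (∑ x, p (x, y, z)) / pY p y

/-- The distribution of (A_y, B_y, C_y) = do(p | c_y). -/
noncomputable def doy (p : X × Y × Z → ℝ) (y : Y) : X × Y × Z → ℝ := doOp p (cy p y)

/-- c^x(z) = Pr(Z = z | X = x). -/
noncomputable def cx (p : X × Y × Z → ℝ) (x : X) : Z → ℝ :=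
  fun z => (∑ y, p (x, y, z)) / pX p x

/-- The distribution of (A^x, B^x, C^x) = do(p | c^x). -/
noncomputable def dox (p : X × Y × Z → ℝ) (x : X) : X × Y × Z → ℝ := doOp p (cx p x)

/-- Unique information Un(X→Z|Y) = Σ_{y : p_Y(y)>0} p_Y(y)·I(A_y;C_y). -/
noncomputable def Un (p : X × Y × Z → ℝ) : ℝ :=
  ∑ y ∈ Finset.univ.filter (fun y => 0 < pY p y), pY p y * mutInfo (margXZ (doy p y))

/-- Unique information Un(Y→Z|X) = Σ_{x : p_X(x)>0} p_X(x)·I(B^x;C^x). -/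
noncomputable def UnYX (p : X × Y × Z → ℝ) : ℝ :=
  ∑ x ∈ Finset.univ.filter (fun x => 0 < pX p x), pX p x * mutInfo (margYZ (dox p x))

/-- Redundant information Red(X,Y→Z) = I(X;Z) − Un(X→Z|Y). -/
noncomputable def Red (p : X × Y × Z → ℝ) : ℝ := mutInfo (margXZ p) - Un p

/-- Conditional mutual information I(X;Z|Y) = H(X,Y) + H(Y,Z) − H(Y) − H(X,Y,Z). -/
noncomputable def condMI (p : X × Y × Z → ℝ) : ℝ :=
  ent (margXY p) + ent (margYZ p) - ent (pY p) - ent p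

/-- Synergistic information Syn(X,Y→Z) = I(X;Z|Y) − Un(X→Z|Y). -/
noncomputable def Syn (p : X × Y × Z → ℝ) : ℝ := condMI p - Un p

end PID

/-!
Conditioning on `Z` splits `H(X|Z)` into contributions `p_Z(z) · H(X|Z=z)`, each homogeneous of
degree one in the fibre `x ↦ p(x, z)`. The distribution `do(p|c_y)` has the same conditional law of
`X` given `Z` as `p`, so it only rescales the fibre over `z`, by `c_y(z) / p_Z(z)`. Averaging over
`y` with weights `p_Y(y)` restores every fibre, because `∑ y, p_Y(y) c_y(z) = p_Z(z)`.
-/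

section Entropy

variable {X Z ι : Type*} [Fintype X] [Fintype Z]

/-- The homogeneous entropy `(∑ x, v x) · H(v / ∑ x, v x)` of a weight vector `v`, which is the
contribution `p_Z(z) · H(X|Z=z)` to `H(X|Z)` when `v` is the fibre over `z`. It is written without
division, so that it is defined also for weights of total mass zero. -/
noncomputable def homEnt (v : X → ℝ) : ℝ :=
  ent v - Real.negMulLog (∑ x, v x)

lemma homEnt_const_mul (k : ℝ) (v : X → ℝ) :
    homEnt (fun x => k * v x) = k * homEnt v := by
  simp only [homEnt, ent, ← mul_sum, Real.negMulLog_mul, sum_add_distrib, ← sum_mul]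
  ring

lemma condEntFst_eq_sum_homEnt (q : X × Z → ℝ) :
    condEntFst q = ∑ z, homEnt fun x => q (x, z) := by
  simp only [condEntFst, homEnt, ent, sum_sub_distrib, Fintype.sum_prod_type_right]

lemma condEntFst_snd_mul (k : Z → ℝ) (q : X × Z → ℝ) :
    condEntFst (fun t => k t.2 * q t) = ∑ z, k z * homEnt fun x => q (x, z) := by
  simp only [condEntFst_eq_sum_homEnt, homEnt_const_mul]

lemma sum_mul_condEntFst_snd_mul (s : Finset ι) (w : ι → ℝ) (k : ι → Z → ℝ) (q : X × Z → ℝ)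
    (hwk : ∀ x z, q (x, z) ≠ 0 → ∑ i ∈ s, w i * k i z = 1) :
    ∑ i ∈ s, w i * condEntFst (fun t => k i t.2 * q t) = condEntFst q := by
  have restore_fibre (z : Z) (x : X) : (∑ i ∈ s, w i * k i z) * q (x, z) = q (x, z) := by
    by_cases hq : q (x, z) = 0
    · rw [hq, mul_zero]
    · rw [hwk x z hq, one_mul]
  calc ∑ i ∈ s, w i * condEntFst (fun t => k i t.2 * q t)
      = ∑ z, (∑ i ∈ s, w i * k i z) * homEnt fun x => q (x, z) := by
        simp only [condEntFst_snd_mul, mul_sum, sum_mul, mul_assoc]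
        exact sum_comm
    _ = condEntFst q := by
        simp only [← homEnt_const_mul, restore_fibre, ← condEntFst_eq_sum_homEnt]

end Entropy

section Marginals

variable {X Y Z : Type*} [Fintype X] {p : X × Y × Z → ℝ}

lemma pY_nonneg [Fintype Z] (hp : ∀ t, 0 ≤ p t) (y : Y) : 0 ≤ pY p y :=
  sum_nonneg fun _ _ => sum_nonneg fun _ _ => hp _

lemma pZ_nonneg [Fintype Y] (hp : ∀ t, 0 ≤ p t) (z : Z) : 0 ≤ pZ p z :=
  sum_nonneg fun _ _ => sum_nonneg fun _ _ => hp _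

lemma margYZ_eq_zero_of_pY_eq_zero [Fintype Z] (hp : ∀ t, 0 ≤ p t) {y : Y} (hy : pY p y = 0)
    (z : Z) : margYZ p (y, z) = 0 := by
  have sum_margYZ : ∑ z, margYZ p (y, z) = 0 := sum_comm.trans hy
  exact (sum_eq_zero_iff_of_nonneg fun _ _ => sum_nonneg fun _ _ => hp _).1 sum_margYZ z
    (mem_univ z)

lemma margXZ_eq_zero_of_pZ_eq_zero [Fintype Y] (hp : ∀ t, 0 ≤ p t) {z : Z} (hz : pZ p z = 0)
    (x : X) : margXZ p (x, z) = 0 :=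
  (sum_eq_zero_iff_of_nonneg fun _ _ => sum_nonneg fun _ _ => hp _).1 hz x (mem_univ x)

lemma pY_mul_cy [Fintype Z] (hp : ∀ t, 0 ≤ p t) (y : Y) (z : Z) :
    pY p y * cy p y z = margYZ p (y, z) :=
  mul_div_cancel_of_imp' fun hy => margYZ_eq_zero_of_pY_eq_zero hp hy z

lemma sum_pY_mul_cy [Fintype Y] [Fintype Z] (hp : ∀ t, 0 ≤ p t) (z : Z) :
    ∑ y, pY p y * cy p y z = pZ p z := by
  simp only [pY_mul_cy hp]
  exact sum_comm

lemma doOp_apply_of_nonneg [Fintype Y] (hp : ∀ t, 0 ≤ p t) (c : Z → ℝ) (t : X × Y × Z) :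
    doOp p c t = c t.2.2 / pZ p t.2.2 * p t := by
  rcases (pZ_nonneg hp t.2.2).eq_or_lt' with hz | hz
  -- Division by zero gives `0`, matching the `else` branch of `doOp`.
  · simp [doOp, hz]
  · rw [doOp, if_pos hz]
    ring

lemma margXZ_doOp [Fintype Y] (hp : ∀ t, 0 ≤ p t) (c : Z → ℝ) :
    margXZ (doOp p c) = fun t => c t.2 / pZ p t.2 * margXZ p t := by
  funext t
  simp only [margXZ, doOp_apply_of_nonneg hp, mul_sum]

end Marginals

theorem stmt1_general {X Y Z : Type*} [Fintype X] [Fintype Y] [Fintype Z]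
    (p : X × Y × Z → ℝ) (hp : ∀ t, 0 ≤ p t) :
    condEntFst (margXZ p) =
      ∑ y ∈ Finset.univ.filter (fun y => 0 < pY p y),
        pY p y * condEntFst (margXZ (doy p y)) := by
  have average_rescaling (x : X) (z : Z) (hxz : margXZ p (x, z) ≠ 0) :
      ∑ y, pY p y * (cy p y z / pZ p z) = 1 := by
    have hz : pZ p z ≠ 0 := fun hz => hxz (margXZ_eq_zero_of_pZ_eq_zero hp hz x)
    simp only [← mul_div_assoc, ← sum_div, sum_pY_mul_cy hp, div_self hz]
  calc condEntFst (margXZ p)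
      = ∑ y, pY p y * condEntFst (fun t => cy p y t.2 / pZ p t.2 * margXZ p t) :=
        (sum_mul_condEntFst_snd_mul univ (pY p) (fun y z => cy p y z / pZ p z) (margXZ p)
          average_rescaling).symm
    _ = ∑ y, pY p y * condEntFst (margXZ (doy p y)) := by
        simp only [doy, margXZ_doOp hp]
    _ = ∑ y ∈ univ.filter (fun y => 0 < pY p y), pY p y * condEntFst (margXZ (doy p y)) :=
        (sum_filter_of_ne fun y _ hy => (pY_nonneg hp y).lt_of_ne' (left_ne_zero_of_mul hy)).symm

theorem stmt1 {X Y Z : Type*} [Fintype X] [Fintype Y] [Fintype Z]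
    [Nonempty X] [Nonempty Y] [Nonempty Z]
    (p : X × Y × Z → ℝ) (hp0 : ∀ t, 0 ≤ p t) (hp1 : ∑ t, p t = 1) :
    condEntFst (margXZ p) =
      ∑ y ∈ Finset.univ.filter (fun y => 0 < pY p y),
        pY p y * condEntFst (margXZ (doy p y)) :=
  stmt1_general p hp0
end

section
/- Σ_{y : p_Y(y)>0} p_Y(y)·H(A_y) ≤ H(X), where H(A_y) is the Shannon entropy of the first marginal of do(p|c_y) and H(X) is the Shannon entropy of the 𝒳-marginal of p. -/
open Finset

/-!
For fixed `p`, the `𝒳`-marginal of `do(p|c)` is linear in `c`. The distributions `c_y`, weighted by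
`p_Y(y)`, average to `p_Z`, and `do(p|p_Z) = p`; hence the laws of the `A_y` average to the law of
`X`, and the inequality is Jensen's inequality for the concave function `H`.
-/

section Entropy

variable {α : Type*} [Fintype α]

theorem concaveOn_ent : ConcaveOn ℝ (Set.Ici 0) (ent : (α → ℝ) → ℝ) := by
  refine ⟨convex_Ici 0, fun p hp q hq a b ha hb hab => ?_⟩
  simp only [ent, smul_sum, ← sum_add_distrib]
  exact sum_le_sum fun i _ => Real.concaveOn_negMulLog.2 (hp i) (hq i) ha hb hab

end Entropy

section MarginalX

variable {X Y Z : Type*} [Fintype Y] [Fintype Z]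

theorem pX_nonneg {p : X × Y × Z → ℝ} (hp : 0 ≤ p) : 0 ≤ pX p :=
  fun _ => sum_nonneg fun _ _ => sum_nonneg fun _ _ => hp _

theorem pX_sum_smul {ι : Type*} (s : Finset ι) (w : ι → ℝ) (q : ι → X × Y × Z → ℝ) :
    pX (∑ i ∈ s, w i • q i) = ∑ i ∈ s, w i • pX (q i) := by
  ext x
  simp only [pX, Finset.sum_apply, Pi.smul_apply, smul_sum]
  exact (sum_congr rfl fun _ _ => sum_comm).trans sum_comm

end MarginalX

section MarginalY

variable {X Y Z : Type*} [Fintype X] [Fintype Z] {p : X × Y × Z → ℝ}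

theorem pY_nonneg_s4 (hp : 0 ≤ p) : 0 ≤ pY p :=
  fun _ => sum_nonneg fun _ _ => sum_nonneg fun _ _ => hp _

theorem cy_nonneg (hp : 0 ≤ p) (y : Y) : 0 ≤ cy p y :=
  fun _ => div_nonneg (sum_nonneg fun _ _ => hp _) (pY_nonneg_s4 hp y)

theorem pY_eq_sum_margYZ (p : X × Y × Z → ℝ) (y : Y) : pY p y = ∑ z, margYZ p (y, z) :=
  sum_comm

theorem pY_smul_cy (hp : 0 ≤ p) (y : Y) : pY p y • cy p y = fun z => margYZ p (y, z) := by
  ext z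
  refine mul_div_cancel_of_imp' fun hy => ?_
  have hmarg : ∀ z, 0 ≤ margYZ p (y, z) := fun z => sum_nonneg fun _ _ => hp _
  rw [pY_eq_sum_margYZ, sum_eq_zero_iff_of_nonneg fun z _ => hmarg z] at hy
  exact hy z (mem_univ z)

end MarginalY

section DoOperation

variable {X Y Z : Type*} [Fintype X] [Fintype Y] {p : X × Y × Z → ℝ}

theorem pZ_nonneg_s4 (hp : 0 ≤ p) : 0 ≤ pZ p :=
  fun _ => sum_nonneg fun _ _ => sum_nonneg fun _ _ => hp _

theorem le_pZ (hp : 0 ≤ p) (t : X × Y × Z) : p t ≤ pZ p t.2.2 :=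
  calc p t ≤ ∑ y, p (t.1, y, t.2.2) :=
        single_le_sum (f := fun y => p (t.1, y, t.2.2)) (fun _ _ => hp _) (mem_univ t.2.1)
    _ ≤ pZ p t.2.2 :=
        single_le_sum (f := fun x => ∑ y, p (x, y, t.2.2))
          (fun _ _ => sum_nonneg fun _ _ => hp _) (mem_univ t.1)

theorem doOp_nonneg (hp : 0 ≤ p) {c : Z → ℝ} (hc : 0 ≤ c) : 0 ≤ doOp p c := by
  intro t
  unfold doOp
  split_ifs with hz
  · exact div_nonneg (mul_nonneg (hp t) (hc _)) hz.le
  · exact le_rfl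

theorem doOp_sum_smul {ι : Type*} (p : X × Y × Z → ℝ) (s : Finset ι) (w : ι → ℝ)
    (c : ι → Z → ℝ) : doOp p (∑ i ∈ s, w i • c i) = ∑ i ∈ s, w i • doOp p (c i) := by
  ext t
  by_cases hz : 0 < pZ p t.2.2
  · simp only [doOp, hz, if_true, Finset.sum_apply, Pi.smul_apply, smul_eq_mul, mul_sum,
      sum_div]
    exact sum_congr rfl fun i _ => by ring
  · simp [doOp, hz]

theorem doOp_pZ (hp : 0 ≤ p) : doOp p (pZ p) = p := by
  ext t
  unfold doOp
  split_ifs with hz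
  · exact mul_div_cancel_right₀ _ hz.ne'
  · exact le_antisymm (hp t) ((le_pZ hp t).trans (not_lt.mp hz))

end DoOperation

section Mixture

variable {X Y Z : Type*} [Fintype X] [Fintype Y] [Fintype Z] {p : X × Y × Z → ℝ}

theorem sum_pY (p : X × Y × Z → ℝ) : ∑ y, pY p y = ∑ t, p t := by
  simp only [pY, Fintype.sum_prod_type]
  exact sum_comm

theorem sum_pY_smul_cy (hp : 0 ≤ p) : ∑ y, pY p y • cy p y = pZ p := by
  ext z
  simp only [pY_smul_cy hp, Finset.sum_apply]
  exact sum_comm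

theorem sum_mul_ent_pX_doOp_le {ι : Type*} {s : Finset ι} {w : ι → ℝ} {c : ι → Z → ℝ}
    (hp : 0 ≤ p) (hw : ∀ i ∈ s, 0 ≤ w i) (hw1 : ∑ i ∈ s, w i = 1) (hc : ∀ i ∈ s, 0 ≤ c i)
    (hmix : ∑ i ∈ s, w i • c i = pZ p) :
    ∑ i ∈ s, w i * ent (pX (doOp p (c i))) ≤ ent (pX p) :=
  calc ∑ i ∈ s, w i * ent (pX (doOp p (c i)))
      ≤ ent (∑ i ∈ s, w i • pX (doOp p (c i))) :=
        concaveOn_ent.le_map_sum hw hw1 fun i hi => pX_nonneg (doOp_nonneg hp (hc i hi))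
    _ = ent (pX p) := by rw [← pX_sum_smul, ← doOp_sum_smul, hmix, doOp_pZ hp]

end Mixture

theorem stmt4 {X Y Z : Type*} [Fintype X] [Fintype Y] [Fintype Z]
    [Nonempty X] [Nonempty Y] [Nonempty Z]
    (p : X × Y × Z → ℝ) (hp0 : ∀ t, 0 ≤ p t) (hp1 : ∑ t, p t = 1) :
    (∑ y ∈ Finset.univ.filter (fun y => 0 < pY p y), pY p y * ent (pX (doy p y)))
      ≤ ent (pX p) := by
  have pY_pos {y : Y} (hy : pY p y ≠ 0) : 0 < pY p y := (pY_nonneg_s4 hp0 y).lt_of_ne' hy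
  rw [sum_filter_of_ne fun y _ hy => pY_pos (left_ne_zero_of_mul hy)]
  exact sum_mul_ent_pX_doOp_le hp0 (fun y _ => pY_nonneg_s4 hp0 y) ((sum_pY p).trans hp1)
    (fun y _ => cy_nonneg hp0 y) (sum_pY_smul_cy hp0)
end
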